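/- arXiv:2604.10369 — 7 statements merged into one kernel-verified Lean document; each statement's English description precedes it below -/
import Mathlib

section
/- Let G be a finite simple graph, 𝓑 a set of cycles of G satisfying the theta property, and X an important subset of V(G). Then there exists an important balanced subgraph H of (G,𝓑) with V(H) = X. -/
/-!
Choose a balanced subgraph `H` with `V(H) = X` of minimum cost, so that `cost(H)` is the cost of `X`;
one exists because the edgeless subgraph on `X` is balanced. Any balanced `H'` strictly dominating
`H` would make `V(H')` strictly dominate `X`, since the cost of `V(H')` is at most `cost(H')`.
-/

open SimpleGraph

/-- A set of cycles of `G`, given as a predicate on closed walks. -/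
def CycleSet {V : Type*} (G : SimpleGraph V) := ∀ ⦃a : V⦄, G.Walk a a → Prop

/-- A subgraph `H` of `G` is balanced (w.r.t. the set `B` of balanced cycles)
if every cycle of `G` lying inside `H` belongs to `B`. -/
def BalancedSubgraph {V : Type*} {G : SimpleGraph V} (B : CycleSet G) (H : G.Subgraph) : Prop :=
  ∀ (a : V) (c : G.Walk a a), c.IsCycle →
    (∀ e ∈ c.edges, e ∈ H.edgeSet) → (∀ x ∈ c.support, x ∈ H.verts) → B c

/-- `δ_G(X)`: the set of edges of `G` with exactly one endpoint in `X`. -/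
def edgeBoundary {V : Type*} (G : SimpleGraph V) (X : Set V) : Set (Sym2 V) :=
  {e | e ∈ G.edgeSet ∧ ∃ u v : V, e = s(u, v) ∧ u ∈ X ∧ v ∉ X}

/-- The set of edges of `G` with both endpoints in `X`, i.e. the edges of `G[X]`. -/
def inducedEdges {V : Type*} (G : SimpleGraph V) (X : Set V) : Set (Sym2 V) :=
  {e | e ∈ G.edgeSet ∧ ∀ v ∈ e, v ∈ X}

/-- `cost(H) = |δ_G(V(H))| + |E(G[V(H)]) \ E(H)|`. -/
noncomputable def subgraphCost {V : Type*} (G : SimpleGraph V) (H : G.Subgraph) : ℕ :=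
  (edgeBoundary G H.verts).ncard + (inducedEdges G H.verts \ H.edgeSet).ncard

/-- The cost of a vertex set `X`: the minimum cost of a balanced subgraph `H`
with `V(H) = X`. -/
noncomputable def setCost {V : Type*} (G : SimpleGraph V) (B : CycleSet G) (X : Set V) : ℕ :=
  sInf {c : ℕ | ∃ H : G.Subgraph, BalancedSubgraph B H ∧ H.verts = X ∧ subgraphCost G H = c}

/-- `H'` strictly dominates `H`. -/
def StrictlyDominates {V : Type*} (G : SimpleGraph V) (H' H : G.Subgraph) : Prop :=
  H.verts ⊆ H'.verts ∧ subgraphCost G H' ≤ subgraphCost G H ∧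
    (H.verts ⊂ H'.verts ∨ subgraphCost G H' < subgraphCost G H)

/-- An important balanced subgraph: a balanced subgraph strictly dominated by
no balanced subgraph. -/
def ImportantBalancedSubgraph {V : Type*} {G : SimpleGraph V}
    (B : CycleSet G) (H : G.Subgraph) : Prop :=
  BalancedSubgraph B H ∧
    ∀ H' : G.Subgraph, BalancedSubgraph B H' → ¬ StrictlyDominates G H' H

/-- `X` strictly dominates `Y` (as vertex sets). -/
def StrictlySetDominates {V : Type*} (G : SimpleGraph V) (B : CycleSet G)
    (X Y : Set V) : Prop :=
  Y ⊆ X ∧ setCost G B X ≤ setCost G B Y ∧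
    (Y ⊂ X ∨ setCost G B X < setCost G B Y)

/-- An important subset: a vertex set strictly dominated by no vertex set. -/
def ImportantSubset {V : Type*} (G : SimpleGraph V) (B : CycleSet G) (X : Set V) : Prop :=
  ∀ Y : Set V, ¬ StrictlySetDominates G B Y X

/-- The theta property: for any two vertices and any three pairwise internally
vertex-disjoint paths between them, whenever two of the three resulting cycles
are balanced, so is the third. -/
def ThetaProperty {V : Type*} {G : SimpleGraph V} (B : CycleSet G) : Prop :=
  ∀ (u v : V) (P₁ P₂ P₃ : G.Walk u v),
    u ≠ v → P₁.IsPath → P₂.IsPath → P₃.IsPath →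
    (∀ x ∈ P₁.support, x ∈ P₂.support → x = u ∨ x = v) →
    (∀ x ∈ P₁.support, x ∈ P₃.support → x = u ∨ x = v) →
    (∀ x ∈ P₂.support, x ∈ P₃.support → x = u ∨ x = v) →
    ((B (P₁.append P₂.reverse) ∧ B (P₂.append P₃.reverse)) → B (P₁.append P₃.reverse)) ∧
    ((B (P₁.append P₂.reverse) ∧ B (P₁.append P₃.reverse)) → B (P₂.append P₃.reverse)) ∧
    ((B (P₂.append P₃.reverse) ∧ B (P₁.append P₃.reverse)) → B (P₁.append P₂.reverse))

/-- The edgeless subgraph on `X` is balanced, so the minimum defining `setCost` ranges over a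
nonempty set and is not the junk value `sInf ∅ = 0`. -/
lemma exists_balancedSubgraph_subgraphCost_eq {V : Type*} {G : SimpleGraph V} (B : CycleSet G)
    (X : Set V) :
    ∃ H : G.Subgraph, BalancedSubgraph B H ∧ H.verts = X ∧ subgraphCost G H = setCost G B X := by
  let H₀ : G.Subgraph :=
    { verts := X
      Adj := fun _ _ => False
      adj_sub := fun h => h.elim
      edge_vert := fun h => h.elim
      symm := ⟨fun _ _ h => h⟩ }
  have hH₀ : BalancedSubgraph B H₀ := by
    intro a c hc he _
    exfalso
    cases c with
    | nil => exact hc.ne_nil rfl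
    | cons h p =>
      have h₁ := he _ (by rw [Walk.edges_cons]; exact List.mem_cons_self)
      rw [Subgraph.mem_edgeSet] at h₁
      exact h₁
  exact Nat.sInf_mem (s := {c : ℕ | ∃ H : G.Subgraph, BalancedSubgraph B H ∧ H.verts = X ∧
    subgraphCost G H = c}) ⟨_, H₀, hH₀, rfl, rfl⟩

lemma setCost_verts_le {V : Type*} {G : SimpleGraph V} {B : CycleSet G} {H : G.Subgraph}
    (hH : BalancedSubgraph B H) : setCost G B H.verts ≤ subgraphCost G H :=
  Nat.sInf_le ⟨H, hH, rfl, rfl⟩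

/-- Every important subset is the vertex set of an important balanced subgraph. -/
theorem important_subset_is_vertexSet_of_important_balanced_subgraph
    {V : Type*} [Fintype V] {G : SimpleGraph V} (B : CycleSet G)
    (hTheta : ThetaProperty B)
    (X : Set V) (hX : ImportantSubset G B X) :
    ∃ H : G.Subgraph, ImportantBalancedSubgraph B H ∧ H.verts = X := by
  obtain ⟨H, hH, rfl, hcost⟩ := exists_balancedSubgraph_subgraphCost_eq B X
  refine ⟨H, ⟨hH, ?_⟩, rfl⟩
  rintro H' hH' ⟨hsub, hle, hstrict⟩
  have hle' := setCost_verts_le hH'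
  exact hX H'.verts ⟨hsub, by omega, hstrict.imp_right fun h => by omega⟩
end

section
/- Let G be a finite simple graph and 𝓑 any set of cycles of G. Let H be a balanced subgraph of (G,𝓑) and let e = uv be an edge of G whose endpoints u and v lie in two distinct connected components of H. Then the subgraph H + e obtained by adding the edge e to H is balanced, and cost(H + e) = cost(H) − 1. In particular, if H is an important balanced subgraph, then G has no edge between two distinct connected components of H. -/
/-!
Adding the edge `uv` between two components of `H` makes it a bridge of the enlarged graph, and a
bridge lies on no cycle (`isBridge_sup_subgraphOfAdj`). Hence every cycle of `H + uv` is already a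
cycle of `H`, which gives balance. The vertex set does not change, so the edge boundary is the same,
while exactly the edge `uv` leaves the set of induced edges missing from the subgraph
(`subgraphCost_sup_subgraphOfAdj`); the cost therefore drops by one and `H + uv` strictly
dominates `H`.
-/

open SimpleGraph

/-- A walk in `H.spanningCoe` that starts in `H` never leaves `H`, so it gives reachability in the
graph `H.coe` on the vertices of `H`. -/
theorem reachable_coe_of_walk_spanningCoe {V : Type*} {G : SimpleGraph V} {H : G.Subgraph}
    {a b : V} (p : H.spanningCoe.Walk a b) (ha : a ∈ H.verts) (hb : b ∈ H.verts) :
    H.coe.Reachable ⟨a, ha⟩ ⟨b, hb⟩ := by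
  induction p with
  | nil => exact Reachable.refl _
  | cons h p ih =>
    have h' : H.Adj _ _ := h
    have hadj : H.coe.Adj ⟨_, ha⟩ ⟨_, h'.snd_mem⟩ := h'
    exact hadj.reachable.trans (ih h'.snd_mem hb)

theorem isBridge_sup_subgraphOfAdj {V : Type*} {G : SimpleGraph V} {H : G.Subgraph} {u v : V}
    (huv : G.Adj u v) (hu : u ∈ H.verts) (hv : v ∈ H.verts)
    (hsep : ¬ H.coe.Reachable ⟨u, hu⟩ ⟨v, hv⟩) :
    (H ⊔ G.subgraphOfAdj huv).spanningCoe.IsBridge s(u, v) := by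
  rw [isBridge_iff]
  rintro ⟨p⟩
  refine hsep (reachable_coe_of_walk_spanningCoe (p.mapLe ?_) hu hv)
  intro a b hab
  simp only [deleteEdges_adj, Subgraph.spanningCoe_adj, Subgraph.sup_adj, subgraphOfAdj_adj,
    Set.mem_singleton_iff] at hab ⊢
  grind

theorem subgraphCost_sup_subgraphOfAdj {V : Type*} [Finite V] {G : SimpleGraph V}
    {H : G.Subgraph} {u v : V} (huv : G.Adj u v) (hu : u ∈ H.verts) (hv : v ∈ H.verts)
    (hnadj : ¬ H.Adj u v) :
    subgraphCost G (H ⊔ G.subgraphOfAdj huv) + 1 = subgraphCost G H := by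
  have hverts : (H ⊔ G.subgraphOfAdj huv).verts = H.verts := by
    simp [hu, hv]
  have hmem : s(u, v) ∈ inducedEdges G H.verts \ H.edgeSet :=
    ⟨⟨huv, by simp [hu, hv]⟩, hnadj⟩
  have hdiff : inducedEdges G H.verts \ (H ⊔ G.subgraphOfAdj huv).edgeSet =
      (inducedEdges G H.verts \ H.edgeSet) \ {s(u, v)} := by
    rw [Subgraph.edgeSet_sup, edgeSet_subgraphOfAdj, Set.sdiff_sdiff]
  unfold subgraphCost
  rw [hverts, hdiff, add_assoc, Set.ncard_sdiff_singleton_add_one hmem (Set.toFinite _)]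

/-- Adding to a balanced subgraph `H` an edge `e = uv` of `G` joining two distinct
connected components of `H` yields a balanced subgraph of cost `cost(H) - 1`.
In particular, an important balanced subgraph admits no such edge. -/
theorem balanced_add_bridge_between_components
    {V : Type*} [Fintype V] [DecidableEq V] {G : SimpleGraph V} (B : CycleSet G)
    (H : G.Subgraph) (hH : BalancedSubgraph B H)
    {u v : V} (huv : G.Adj u v)
    (hu : u ∈ H.verts) (hv : v ∈ H.verts)
    (hsep : ¬ H.coe.Reachable ⟨u, hu⟩ ⟨v, hv⟩) :
    BalancedSubgraph B (H ⊔ G.subgraphOfAdj huv) ∧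
    subgraphCost G (H ⊔ G.subgraphOfAdj huv) + 1 = subgraphCost G H ∧
    ¬ ImportantBalancedSubgraph B H := by
  have hnadj : ¬ H.Adj u v := fun h => hsep (Adj.reachable (show H.coe.Adj ⟨u, hu⟩ ⟨v, hv⟩ from h))
  have hbal : BalancedSubgraph B (H ⊔ G.subgraphOfAdj huv) := by
    intro a c hc hE hS
    have hE' : ∀ e ∈ c.edges, e ∈ (H ⊔ G.subgraphOfAdj huv).spanningCoe.edgeSet := by
      intro e he
      have := hE e he
      induction e with | h x y => exact this
    have huvc : s(u, v) ∉ c.edges := by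
      have hbr := isBridge_sup_subgraphOfAdj huv hu hv hsep
      rw [isBridge_iff_forall_cycle_notMem (by simp [huv.ne])] at hbr
      have := hbr (c.transfer _ hE') (hc.transfer hE')
      rwa [Walk.edges_transfer] at this
    refine hH a c hc (fun e he => ?_) (fun x hx => ?_)
    · have := hE e he
      rw [Subgraph.edgeSet_sup, edgeSet_subgraphOfAdj] at this
      exact this.resolve_right fun h => huvc (h ▸ he)
    · rcases hS x hx with h | h
      · exact h
      · rcases h with rfl | rfl <;> assumption
  have hcost := subgraphCost_sup_subgraphOfAdj huv hu hv hnadj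
  exact ⟨hbal, hcost, fun himp =>
    himp.2 _ hbal ⟨Set.subset_union_left, by omega, Or.inr (by omega)⟩⟩
end

section
/- Let G be a finite simple graph and 𝓑 a set of cycles of G satisfying the theta property, such that no connected component of G is balanced (i.e., every component of G contains a cycle not in 𝓑). Let k ≥ 1 and let H be an important balanced subgraph of (G,𝓑) of cost at most k. Then: (1) H has at most k connected components; (2) for every vertex set K of a connected component of H, K is an important subset of (G,𝓑); and (3) for every such K, the neighbourhood N_G(K) is disjoint from V(H). -/
/-!
Count the cost of `H` as the number of *missing* edges: the edges of `G` that meet `V(H)` but do not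
belong to `H`. Three observations then suffice.

* A balanced subgraph with a vertex always misses an edge, since otherwise it would contain an
  entire component of `G`, and with it an unbalanced cycle (`missing_nonempty`).
* Joining two components of `H` by an edge of `G` creates no new cycle, and it lowers the cost. So
  an important `H` has no edge of `G` between different components (`not_adj_of_important`). This
  is the claim on neighbourhoods. It also makes the missing edges at different components distinct,
  and as each component has one, there are at most `cost(H)` components.
* Let `Y` strictly dominate the vertex set `K` of a component, and let `F` be a cheapest balanced
  subgraph on `Y`. If `Y` is not contained in `V(H)`, then the disjoint union of `F` and `H - Y` is
  balanced, has more vertices than `H`, and trades the missing edges at `K` for those of `F`, so it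
  strictly dominates `H`. If `K ⊂ Y ⊆ V(H)`, no edge of `G` joins `K` to `Y \ K`, so restricting
  `F` to `K` saves the missing edges at `Y \ K`, of which there is at least one. Then
  `cost(K) < cost(Y)`, a contradiction.
-/

open SimpleGraph

/-- `N_G(K)`: vertices outside `K` adjacent to a vertex of `K`. -/
def setNeighborhood {V : Type*} (G : SimpleGraph V) (K : Set V) : Set V :=
  {x | x ∉ K ∧ ∃ y ∈ K, G.Adj x y}

namespace ImportantBalanced

variable {V : Type*} {G : SimpleGraph V}

/-! ### Costs as numbers of missing edges -/

/-- The edges of `G` that meet `V(H)` but are not edges of `H`. Their number is the cost of `H`. -/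
def missing (G : SimpleGraph V) (H : G.Subgraph) : Set (Sym2 V) :=
  {e | e ∈ G.edgeSet ∧ (∃ v ∈ e, v ∈ H.verts) ∧ e ∉ H.edgeSet}

theorem subgraphCost_eq [Finite V] (H : G.Subgraph) :
    subgraphCost G H = (missing G H).ncard := by
  unfold subgraphCost
  rw [← Set.ncard_union_eq _ (Set.toFinite _) (Set.toFinite _)]
  · congr 1
    ext e
    induction e using Sym2.ind with
    | _ a b =>
      simp only [edgeBoundary, inducedEdges, missing, Set.mem_union, Set.mem_ofPred_eq,
        Set.mem_sdiff, Sym2.mem_iff, Subgraph.mem_edgeSet, mem_edgeSet]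
      constructor
      · rintro (⟨h, u, v, he, hu, hv⟩ | ⟨⟨h, hv⟩, hn⟩)
        · refine ⟨h, ⟨u, ?_, hu⟩, fun hab => hv ?_⟩
          · have : u ∈ s(a, b) := he ▸ Sym2.mem_mk_left u v
            simpa using this
          · have : v ∈ s(a, b) := he ▸ Sym2.mem_mk_right u v
            rcases Sym2.mem_iff.1 this with rfl | rfl
            exacts [hab.fst_mem, hab.snd_mem]
        · exact ⟨h, ⟨a, Or.inl rfl, hv a (Or.inl rfl)⟩, hn⟩
      · rintro ⟨h, ⟨v, hv, hvH⟩, hn⟩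
        by_cases ha : a ∈ H.verts <;> by_cases hb : b ∈ H.verts
        · right
          refine ⟨⟨h, ?_⟩, hn⟩
          rintro x (rfl | rfl) <;> assumption
        · exact Or.inl ⟨h, a, b, rfl, ha, hb⟩
        · exact Or.inl ⟨h, b, a, Sym2.eq_swap, hb, ha⟩
        · rcases hv with rfl | rfl <;> contradiction
  · rw [Set.disjoint_left]
    rintro e ⟨_, u, v, rfl, hu, hv⟩ ⟨⟨_, h⟩, _⟩
    exact hv (h v (Sym2.mem_mk_right u v))

theorem setCost_le {B : CycleSet G} {F : G.Subgraph} (hF : BalancedSubgraph B F) :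
    setCost G B F.verts ≤ subgraphCost G F :=
  Nat.sInf_le ⟨F, hF, rfl, rfl⟩

/-- The minimum defining `setCost` is attained: the edgeless subgraph on `X` is balanced, so the
infimum is not the junk value of an empty set. -/
theorem exists_setCost (B : CycleSet G) (X : Set V) :
    ∃ F : G.Subgraph, BalancedSubgraph B F ∧ F.verts = X ∧ subgraphCost G F = setCost G B X := by
  refine Nat.sInf_mem (s := {c : ℕ | ∃ H : G.Subgraph, BalancedSubgraph B H ∧ H.verts = X ∧
    subgraphCost G H = c}) ⟨_, ⟨⟨X, fun _ _ => False, fun h => h.elim, fun h => h.elim,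
      ⟨fun _ _ h => h⟩⟩, ?_, rfl, rfl⟩⟩
  intro a c hc he _
  cases c with
  | nil => exact absurd rfl hc.ne_nil
  | cons h p => exact (he _ (List.mem_cons_self ..)).elim

/-! ### Balanced subgraphs -/

theorem balanced_mono {B : CycleSet G} {F F' : G.Subgraph}
    (hF' : BalancedSubgraph B F') (h : F ≤ F') : BalancedSubgraph B F :=
  fun a c hc he hs => hF' a c hc (fun e hm => Subgraph.edgeSet_mono h (he e hm))
    (fun x hx => h.1 (hs x hx))

/-- A walk that cannot leave `S` along any of its edges stays in `S`. -/
theorem support_subset (S : Set V) {a b : V} (c : G.Walk a b)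
    (hS : ∀ u v, s(u, v) ∈ c.edges → u ∈ S → v ∈ S) (ha : a ∈ S) :
    ∀ x ∈ c.support, x ∈ S := by
  induction c with
  | nil => simpa using ha
  | cons h p ih =>
    intro x hx
    rcases List.mem_cons.1 (by simpa using hx) with rfl | hx
    · exact ha
    · exact ih (fun u v huv => hS u v (by simp [huv])) (hS _ _ (by simp) ha) x hx

theorem missing_nonempty {B : CycleSet G}
    (hNoBal : ∀ comp : G.ConnectedComponent, ∃ (a : V) (c : G.Walk a a),
      c.IsCycle ∧ G.connectedComponentMk a = comp ∧ ¬ B c)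
    {F : G.Subgraph} (hF : BalancedSubgraph B F) (hne : F.verts.Nonempty) :
    (missing G F).Nonempty := by
  by_contra hem
  have key : ∀ u v, G.Adj u v → u ∈ F.verts → F.Adj u v := fun u v h hu => by
    by_contra hn
    exact hem ⟨s(u, v), h, ⟨u, by simp, hu⟩, hn⟩
  obtain ⟨z, hz⟩ := hne
  obtain ⟨a, c, hc, ha, hB⟩ := hNoBal (G.connectedComponentMk z)
  obtain ⟨p⟩ := ConnectedComponent.eq.1 ha.symm
  have haF : a ∈ F.verts := support_subset F.verts p
    (fun u v huv hu => (key u v (p.adj_of_mem_edges huv) hu).snd_mem) hz a p.end_mem_support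
  have hs := support_subset F.verts c
    (fun u v huv hu => (key u v (c.adj_of_mem_edges huv) hu).snd_mem) haF
  refine hB (hF a c hc (fun e he => ?_) hs)
  induction e using Sym2.ind with
  | _ u v => exact key u v (c.adj_of_mem_edges he) (hs u (c.fst_mem_support_of_mem_edges he))

/-- The union of two balanced subgraphs with no common vertices is balanced. -/
theorem balanced_sup {B : CycleSet G} {F F' : G.Subgraph}
    (hd : Disjoint F.verts F'.verts) (hF : BalancedSubgraph B F) (hF' : BalancedSubgraph B F') :
    BalancedSubgraph B (F ⊔ F') := by
  rw [Set.disjoint_left] at hd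
  have main : ∀ F F' : G.Subgraph, (∀ x, x ∈ F.verts → x ∉ F'.verts) → BalancedSubgraph B F →
      ∀ (a : V) (c : G.Walk a a), c.IsCycle → (∀ e ∈ c.edges, e ∈ (F ⊔ F').edgeSet) →
      a ∈ F.verts → B c := by
    intro F F' hd hF a c hc he ha
    have stay : ∀ u v, s(u, v) ∈ c.edges → u ∈ F.verts → F.Adj u v := fun u v huv hu => by
      rcases Subgraph.sup_adj.1 (he _ huv) with h | h
      · exact h
      · exact absurd h.fst_mem (hd u hu)
    have hs := support_subset F.verts c (fun u v huv hu => (stay u v huv hu).snd_mem) ha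
    refine hF a c hc (fun e hm => ?_) hs
    induction e using Sym2.ind with
    | _ u v => exact stay u v hm (hs u (c.fst_mem_support_of_mem_edges hm))
  intro a c hc he hs
  rcases hs a c.start_mem_support with ha | ha
  · exact main F F' hd hF a c hc he ha
  · exact main F' F (fun x h h' => hd h' h) hF' a c hc (by rwa [sup_comm]) ha

/-! ### Unions of components of an important balanced subgraph -/

/-- If `K` is closed under adjacency in `H`, then an important `H` has no edge of `G` from `K` to
the rest of `V(H)`: such an edge would be a bridge after being added to `H`, so it could be added
without creating a cycle. -/
theorem not_adj_of_important [Finite V] {B : CycleSet G} {H : G.Subgraph}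
    (hImp : ImportantBalancedSubgraph B H) {K : Set V} (hK : ∀ u v, H.Adj u v → u ∈ K → v ∈ K)
    {x y : V} (hx : x ∈ K) (hxH : x ∈ H.verts) (hyH : y ∈ H.verts) (hy : y ∉ K) :
    ¬ G.Adj x y := by
  intro hadj
  have hle : G.subgraphOfAdj hadj ≤ H ⊔ G.subgraphOfAdj hadj := le_sup_right
  have hverts : (H ⊔ G.subgraphOfAdj hadj).verts = H.verts := by
    simp [hxH, hyH]
  have hmem : ∀ e, e ∈ (H ⊔ G.subgraphOfAdj hadj).edgeSet ↔ e ∈ H.edgeSet ∨ e = s(x, y) := by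
    intro e; simp [Subgraph.edgeSet_sup]; tauto
  have hxy : s(x, y) ∉ H.edgeSet := fun h => hy (hK x y h hx)
  refine hImp.2 (H ⊔ G.subgraphOfAdj hadj) ?_ ⟨hverts.ge, ?_⟩
  · intro a c hc he hs
    have hno : s(x, y) ∉ c.edges := by
      intro hin
      have hc' : ∀ e ∈ c.edges, e ∈ (H ⊔ G.subgraphOfAdj hadj).spanningCoe.edgeSet := by
        rwa [Subgraph.edgeSet_spanningCoe]
      -- The cycle minus the new edge would connect `x` to `y` inside `H`.
      have hnb : (((H ⊔ G.subgraphOfAdj hadj).spanningCoe) \ fromEdgeSet {s(x, y)}).Reachable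
          x y := by
        refine (adj_and_reachable_delete_edges_iff_exists_cycle.2
          ⟨a, c.transfer _ hc', hc.transfer hc', ?_⟩).2
        rwa [Walk.edges_transfer]
      obtain ⟨p⟩ := hnb
      refine hy (support_subset K p (fun u v huv hu => ?_) hx y p.end_mem_support)
      have h := p.adj_of_mem_edges huv
      rw [sdiff_adj, fromEdgeSet_adj] at h
      rcases (hmem s(u, v)).1 h.1 with h' | h'
      · exact hK u v h' hu
      · exact absurd ⟨h', h.1.ne⟩ h.2
    refine hImp.1 a c hc (fun e hm => ?_) (fun z hz => hverts ▸ hs z hz)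
    rcases (hmem e).1 (he e hm) with h | rfl
    · exact h
    · exact absurd hm hno
  · have hlt : subgraphCost G (H ⊔ G.subgraphOfAdj hadj) < subgraphCost G H := by
      rw [subgraphCost_eq, subgraphCost_eq]
      refine Set.ncard_lt_ncard ⟨?_, fun h => ?_⟩ (Set.toFinite _)
      · rintro e ⟨h1, h2, h3⟩
        exact ⟨h1, hverts ▸ h2, fun h => h3 ((hmem e).2 (Or.inl h))⟩
      · have := h (show s(x, y) ∈ missing G H from ⟨hadj, ⟨x, by simp, hxH⟩, hxy⟩)
        exact this.2.2 ((hmem _).2 (Or.inr rfl))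
    exact ⟨hlt.le, Or.inr hlt⟩

/-- Edges of `H` at `K` lie inside `K` when `K` is closed under adjacency in `H`, so the edges
missing from `H[K]` are exactly the edges missing from `H` that meet `K`. -/
theorem mem_missing_induce {H : G.Subgraph} {K : Set V} (hKH : K ⊆ H.verts)
    (hK : ∀ u v, H.Adj u v → u ∈ K → v ∈ K) (e : Sym2 V) :
    e ∈ missing G (H.induce K) ↔ e ∈ missing G H ∧ ∃ v ∈ e, v ∈ K := by
  induction e using Sym2.ind with
  | _ u v =>
    simp only [missing, Set.mem_ofPred_eq, Subgraph.induce_verts, Subgraph.mem_edgeSet,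
      Subgraph.induce_adj]
    constructor
    · rintro ⟨h1, ⟨w, hw, hwK⟩, h3⟩
      refine ⟨⟨h1, ⟨w, hw, hKH hwK⟩, fun h => h3 ?_⟩, w, hw, hwK⟩
      rcases Sym2.mem_iff.1 hw with rfl | rfl
      · exact ⟨hwK, hK _ _ h hwK, h⟩
      · exact ⟨hK _ _ h.symm hwK, hwK, h⟩
    · rintro ⟨⟨h1, _, h3⟩, hw⟩
      exact ⟨h1, hw, fun h => h3 h.2.2⟩

/-- A union `K` of components of an important balanced subgraph is an important subset. The
hypothesis `hK` says that no edge of `H` leaves `K`. -/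
theorem important_of_closed [Finite V] {B : CycleSet G}
    (hNoBal : ∀ comp : G.ConnectedComponent, ∃ (a : V) (c : G.Walk a a),
      c.IsCycle ∧ G.connectedComponentMk a = comp ∧ ¬ B c)
    {H : G.Subgraph} (hImp : ImportantBalancedSubgraph B H) {K : Set V} (hKH : K ⊆ H.verts)
    (hK : ∀ u v, H.Adj u v → u ∈ K → v ∈ K) : ImportantSubset G B K := by
  rintro Y ⟨hKY, hle, hstrict⟩
  obtain ⟨F, hF, rfl, hFc⟩ := exists_setCost B Y
  have hHK : BalancedSubgraph B (H.induce K) :=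
    balanced_mono hImp.1 ((Subgraph.induce_mono_right hKH).trans_eq Subgraph.induce_self_verts)
  have hKcost : setCost G B K ≤ subgraphCost G (H.induce K) := setCost_le hHK
  by_cases hYH : F.verts ⊆ H.verts
  · by_cases hYK : F.verts ⊆ K
    · obtain rfl := hYK.antisymm hKY
      rcases hstrict with h | h
      · exact h.2 subset_rfl
      · exact h.ne rfl
    -- `F` splits into its parts on `K` and `Y \ K`, and the second part has positive cost.
    · obtain ⟨e, he⟩ := missing_nonempty hNoBal (F := F.induce (F.verts \ K))
        (balanced_mono hF ((Subgraph.induce_mono_right Set.sdiff_subset).trans_eq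
          Subgraph.induce_self_verts)) (Set.sdiff_nonempty.2 hYK)
      have hsep : ∀ u v, G.Adj u v → u ∈ F.verts → v ∈ F.verts → u ∈ K → v ∈ K := by
        intro u v h hu hv huK
        by_contra hvK
        exact not_adj_of_important hImp hK huK (hKH huK) (hYH hv) hvK h
      have hcl : ∀ u v, F.Adj u v → u ∈ K → v ∈ K :=
        fun u v h => hsep u v h.adj_sub h.fst_mem h.snd_mem
      have hcl' : ∀ u v, F.Adj u v → u ∈ F.verts \ K → v ∈ F.verts \ K :=
        fun u v h hu => ⟨h.snd_mem, fun hv => hu.2 (hcl v u h.symm hv)⟩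
      have hlt : subgraphCost G (F.induce K) < subgraphCost G F := by
        rw [subgraphCost_eq, subgraphCost_eq]
        refine Set.ncard_lt_ncard ⟨fun f hf => ((mem_missing_induce hKY hcl f).1 hf).1,
          fun h => ?_⟩ (Set.toFinite _)
        obtain ⟨heF, v, hv, hvY, hvK⟩ := (mem_missing_induce Set.sdiff_subset hcl' e).1 he
        obtain ⟨-, w, hw, hwK⟩ := (mem_missing_induce hKY hcl e).1 (h heF)
        have hne : w ≠ v := by rintro rfl; exact hvK hwK
        have hadj : G.Adj w v := by
          have := heF.1
          rwa [(Sym2.mem_and_mem_iff hne).1 ⟨hw, hv⟩] at this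
        exact hvK (hsep w v hadj (hKY hwK) hvY hwK)
      have h2 : setCost G B K ≤ subgraphCost G (F.induce K) :=
        setCost_le (balanced_mono hF ((Subgraph.induce_mono_right hKY).trans_eq
          Subgraph.induce_self_verts))
      omega
  · have hbal : BalancedSubgraph B (F ⊔ H.deleteVerts F.verts) :=
      balanced_sup (by simpa using Set.disjoint_sdiff_right) hF
        (balanced_mono hImp.1 Subgraph.deleteVerts_le)
    have hv : (F ⊔ H.deleteVerts F.verts).verts = F.verts ∪ H.verts := by simp
    have hsub : H.verts ⊆ (F ⊔ H.deleteVerts F.verts).verts := hv ▸ Set.subset_union_right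
    refine hImp.2 _ hbal ⟨hsub, ?_, Or.inl ⟨hsub, fun h => hYH ?_⟩⟩
    · have hinc : missing G (F ⊔ H.deleteVerts F.verts) ⊆
          missing G F ∪ (missing G H \ missing G (H.induce K)) := by
        rintro e ⟨h1, ⟨v, hve, hvm⟩, h3⟩
        rw [Subgraph.edgeSet_sup, Set.mem_union, not_or] at h3
        by_cases hY : ∃ v ∈ e, v ∈ F.verts
        · exact Or.inl ⟨h1, hY, h3.1⟩
        · right
          push Not at hY
          refine ⟨⟨h1, ⟨v, hve, (hv ▸ hvm).resolve_left (hY v hve)⟩, fun h => h3.2 ?_⟩, fun h => ?_⟩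
          · induction e using Sym2.ind with
            | _ u w =>
              have h : H.Adj u w := h
              simp only [Subgraph.mem_edgeSet, Subgraph.deleteVerts_adj]
              exact ⟨h.fst_mem, hY u (by simp), h.snd_mem, hY w (by simp), h⟩
          · obtain ⟨-, w, hw, hwK⟩ := (mem_missing_induce hKH hK e).1 h
            exact hY w hw (hKY hwK)
      have hsubs : missing G (H.induce K) ⊆ missing G H :=
        fun f hf => ((mem_missing_induce hKH hK f).1 hf).1
      have hd := Set.ncard_sdiff_add_ncard_of_subset hsubs (Set.toFinite _)
      have h4 := (Set.ncard_le_ncard hinc (Set.toFinite _)).trans (Set.ncard_union_le _ _)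
      simp only [subgraphCost_eq] at *
      omega
    · exact (hv ▸ Set.subset_union_left : F.verts ⊆ _).trans h

end ImportantBalanced

open ImportantBalanced

/-! ### Components of an important balanced subgraph -/

/-- If no connected component of `G` is balanced, then any important balanced
subgraph `H` of cost at most `k` has at most `k` connected components, the
vertex set of each connected component of `H` is an important subset, and its
neighbourhood in `G` is disjoint from `V(H)`. -/
theorem important_balanced_subgraph_components
    {V : Type*} [Fintype V] {G : SimpleGraph V} (B : CycleSet G)
    (hTheta : ThetaProperty B)
    (hNoBal : ∀ comp : G.ConnectedComponent, ∃ (a : V) (c : G.Walk a a),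
      c.IsCycle ∧ G.connectedComponentMk a = comp ∧ ¬ B c)
    (k : ℕ) (hk : 1 ≤ k)
    (H : G.Subgraph) (hImp : ImportantBalancedSubgraph B H)
    (hcost : subgraphCost G H ≤ k) :
    Nat.card H.coe.ConnectedComponent ≤ k ∧
    ∀ comp : H.coe.ConnectedComponent,
      ImportantSubset G B (Subtype.val '' comp.supp) ∧
      ∀ x ∈ setNeighborhood G (Subtype.val '' comp.supp), x ∉ H.verts := by
  have hcl : ∀ comp : H.coe.ConnectedComponent, ∀ u v, H.Adj u v →
      u ∈ Subtype.val '' comp.supp → v ∈ Subtype.val '' comp.supp := by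
    rintro comp u v h ⟨u', hu', rfl⟩
    refine ⟨⟨v, h.snd_mem⟩, ?_, rfl⟩
    exact (comp.mem_supp_congr_adj (show H.coe.Adj u' ⟨v, h.snd_mem⟩ from h)).1 hu'
  have hsub : ∀ comp : H.coe.ConnectedComponent, Subtype.val '' comp.supp ⊆ H.verts := by
    rintro comp _ ⟨u, -, rfl⟩
    exact u.2
  have hedge : ∀ comp : H.coe.ConnectedComponent, ∃ e ∈ missing G H,
      ∃ v ∈ e, v ∈ Subtype.val '' comp.supp := by
    intro comp
    obtain ⟨e, he⟩ := missing_nonempty hNoBal (F := H.induce (Subtype.val '' comp.supp))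
      (balanced_mono hImp.1 ((Subgraph.induce_mono_right (hsub comp)).trans_eq
        Subgraph.induce_self_verts)) (comp.nonempty_supp.image _)
    exact ⟨e, (mem_missing_induce (hsub comp) (hcl comp) e).1 he⟩
  refine ⟨?_, fun comp => ⟨important_of_closed hNoBal hImp (hsub comp) (hcl comp), ?_⟩⟩
  · choose f hf v hv hvc using hedge
    have hinj : Function.Injective fun comp => (⟨f comp, hf comp⟩ : missing G H) := by
      intro c d hcd
      have hcd : f c = f d := congrArg Subtype.val hcd
      have hmem : v d ∈ Subtype.val '' c.supp := by
        by_contra hn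
        have hne : v c ≠ v d := fun h => hn (h ▸ hvc c)
        have hadj : G.Adj (v c) (v d) := by
          have := (hf c).1
          rwa [(Sym2.mem_and_mem_iff hne).1 ⟨hv c, hcd ▸ hv d⟩] at this
        exact not_adj_of_important hImp (hcl c) (hvc c) (hsub c (hvc c)) (hsub d (hvc d)) hn hadj
      obtain ⟨x, hx, hxv⟩ := hmem
      obtain ⟨y, hy, hyv⟩ := hvc d
      obtain rfl : x = y := Subtype.ext (hxv.trans hyv.symm)
      exact (ConnectedComponent.mem_supp_iff _ _).1 hx ▸ (ConnectedComponent.mem_supp_iff _ _).1 hy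
    have := Nat.card_le_card_of_injective _ hinj
    rw [subgraphCost_eq] at hcost
    exact this.trans hcost
  · rintro x ⟨hxK, y, hy, hadj⟩ hxH
    exact not_adj_of_important hImp (hcl comp) hy (hsub comp hy) hxH hxK hadj.symm
end

section
/- Let 2 ≤ t ≤ k be integers and let V be a set of size k. Then there exist a colouring χ : V → {1,…,t} and a family 𝒬 of t-element subsets of V such that any two distinct members of 𝒬 intersect in at most one element, every member of 𝒬 is multicoloured under χ (χ is injective on it), and |𝒬| ≥ (t!/tᵗ) · (k(k−1)/2 − (1 − 1/(t−1))·k²/2) / (t(t−1)/2). -/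
/-!
Take an inclusion-maximal edge-disjoint packing `Q` of `t`-cliques in the complete graph on `V`.
By maximality the graph of the pairs not covered by `Q` contains no `t`-clique, so Turán's theorem
bounds the number of uncovered edges by `(1 - 1/(t-1)) k²/2`. The covered edges number at most
`|Q| t(t-1)/2`, which gives the required lower bound on `|Q|`, without the factor `t!/tᵗ`
(`exists_large_packing`).

For a uniformly random colouring `V → Fin t`, a fixed `t`-set is multicoloured with probability
`t!/tᵗ` (`card_injOn_mul`). Averaging over all colourings, some colouring makes at least
`|Q| t!/tᵗ` members of `Q` multicoloured (`exists_colouring`); these members form the packing.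
-/

open Finset

/-- Turán's theorem in the form `e(G) ≤ (1 - 1/r) n²/2`, cleared of denominators. -/
lemma two_mul_mul_card_edgeFinset_le {V : Type*} [Fintype V] (G : SimpleGraph V)
    [DecidableRel G.Adj] (r : ℕ) (hr : 0 < r) (hG : G.CliqueFree (r + 1)) :
    2 * r * #G.edgeFinset ≤ (r - 1) * Fintype.card V ^ 2 := by
  obtain ⟨H, _, maxH⟩ := SimpleGraph.exists_isTuranMaximal (V := V) hr
  have h1 : #G.edgeFinset ≤ #H.edgeFinset := by convert! maxH.2 hG
  have h2 := ((SimpleGraph.isTuranMaximal_iff_nonempty_iso_turanGraph hr).mp maxH).some.card_edgeFinset_eq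
  have h3 := SimpleGraph.mul_card_edgeFinset_turanGraph_le (n := Fintype.card V) (r := r)
  rw [← h2] at h3
  exact (Nat.mul_le_mul_left _ h1).trans h3

/-- A maximal packing leaves a `t`-clique-free graph of uncovered pairs, so the number
`k(k-1) = #V.offDiag` of ordered pairs is at most `|Q| t(t-1)` plus twice the Turán bound. -/
lemma exists_large_packing {V : Type*} [Fintype V] [DecidableEq V] (t : ℕ) (ht : 2 ≤ t) :
    ∃ Q : Finset (Finset V), (∀ S ∈ Q, #S = t) ∧
      (∀ S ∈ Q, ∀ T ∈ Q, S ≠ T → #(S ∩ T) ≤ 1) ∧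
      ∃ e : ℕ, 2 * (t - 1) * e ≤ (t - 2) * Fintype.card V ^ 2 ∧
        #(univ : Finset V).offDiag ≤ 2 * e + #Q * (t * t - t) := by
  classical
  obtain ⟨Q, hQ⟩ := (Set.toFinite {Q : Finset (Finset V) | (∀ S ∈ Q, #S = t) ∧
      (∀ S ∈ Q, ∀ T ∈ Q, S ≠ T → #(S ∩ T) ≤ 1)}).exists_maximal ⟨∅, by simp⟩
  have hQP : (∀ S ∈ Q, #S = t) ∧ (∀ S ∈ Q, ∀ T ∈ Q, S ≠ T → #(S ∩ T) ≤ 1) := hQ.1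
  obtain ⟨hc, hp⟩ := hQP
  let G : SimpleGraph V :=
    { Adj := fun x y => x ≠ y ∧ ∀ S ∈ Q, ¬ (x ∈ S ∧ y ∈ S)
      symm := ⟨fun x y h => ⟨h.1.symm, fun S hS hxy => h.2 S hS hxy.symm⟩⟩
      loopless := ⟨fun x h => h.1 rfl⟩ }
  have hfree : G.CliqueFree (t - 1 + 1) := by
    rw [Nat.sub_add_cancel (by lia)]
    intro S hS
    have hST : ∀ T ∈ Q, #(S ∩ T) ≤ 1 := by
      intro T hT
      rw [card_le_one]
      intro a ha b hb
      rw [mem_inter] at ha hb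
      by_contra hab
      exact (hS.1 ha.1 hb.1 hab).2 T hT ⟨ha.2, hb.2⟩
    have hSQ : S ∉ Q := by
      intro h
      have := hST S h
      rw [inter_self, hS.2] at this
      lia
    refine hSQ (hQ.2 (y := insert S Q) ⟨?_, ?_⟩ (subset_insert S Q) (mem_insert_self S Q))
    · intro T hT
      rcases mem_insert.1 hT with rfl | hT
      · exact hS.2
      · exact hc T hT
    · intro T hT U hU hne
      rcases mem_insert.1 hT with rfl | hTQ <;> rcases mem_insert.1 hU with rfl | hUQ
      · exact absurd rfl hne
      · exact hST U hUQ
      · rw [inter_comm]; exact hST T hTQ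
      · exact hp T hTQ U hUQ hne
  refine ⟨Q, hc, hp, #G.edgeFinset, ?_, ?_⟩
  · have := two_mul_mul_card_edgeFinset_le G (t - 1) (by lia) hfree
    rwa [Nat.sub_sub] at this
  · have hcover : (univ : Finset V).offDiag ⊆
        (univ.filter fun (x, y) ↦ G.Adj x y) ∪ Q.biUnion offDiag := by
      rintro ⟨x, y⟩ hxy
      have hne : x ≠ y := by simpa using hxy
      by_cases h : ∃ S ∈ Q, x ∈ S ∧ y ∈ S
      · obtain ⟨S, hS, hx, hy⟩ := h
        exact mem_union_right _ (mem_biUnion.2 ⟨S, hS, mem_offDiag.2 ⟨hx, hy, hne⟩⟩)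
      · refine mem_union_left _ (mem_filter.2 ⟨mem_univ _, hne, fun S hS hxy => h ⟨S, hS, hxy⟩⟩)
    refine (card_le_card hcover).trans ((card_union_le _ _).trans ?_)
    rw [G.two_mul_card_edgeFinset]
    refine Nat.add_le_add_left (card_biUnion_le_card_mul _ _ _ fun S hS => ?_) _
    rw [offDiag_card, hc S hS]

/-- A `t`-set is multicoloured with probability `t!/tᵗ` under a uniformly random colouring. -/
lemma card_injOn_mul {V : Type*} [Fintype V] [DecidableEq V] (t : ℕ) (S : Finset V)
    (hS : #S = t) [DecidablePred fun χ : V → Fin t => Set.InjOn χ ↑S] :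
    #(univ.filter fun χ : V → Fin t => Set.InjOn χ ↑S) * t ^ t =
      t.factorial * Fintype.card (V → Fin t) := by
  classical
  let E := Equiv.piEquivPiSubtypeProd (fun x => x ∈ S) (fun _ : V => Fin t)
  let F : {χ : V → Fin t // Set.InjOn χ ↑S} ≃
      ({x // x ∈ S} ↪ Fin t) × ({x // x ∉ S} → Fin t) :=
    (E.subtypeEquiv (q := fun p => Function.Injective p.1 ∧ True) fun χ => by
        rw [and_true]
        exact Set.injOn_iff_injective).trans <|
      (Equiv.subtypeProdEquivProd (p := fun f : {x // x ∈ S} → Fin t => Function.Injective f)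
        (q := fun _ : {x // x ∉ S} → Fin t => True)).trans <|
      (Equiv.subtypeInjectiveEquivEmbedding _ _).prodCongr
        (Equiv.subtypeUnivEquiv fun _ => trivial)
  have hF := Fintype.card_congr F
  have hE := Fintype.card_congr E
  have hSc : Fintype.card {x // x ∈ S} = t := by rw [Fintype.card_coe, hS]
  rw [Fintype.card_prod, Fintype.card_embedding_eq, hSc, Fintype.card_fin,
    Nat.descFactorial_self] at hF
  rw [Fintype.card_prod, Fintype.card_fun (α := {x // x ∈ S}), hSc, Fintype.card_fin] at hE
  rw [← Fintype.card_subtype, hF, hE]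
  ring

/-- Averaging over colourings: some colouring makes a proportion `t!/tᵗ` of a family of
`t`-sets multicoloured. -/
lemma exists_colouring {V : Type*} [Fintype V] [DecidableEq V] (t : ℕ) (ht : 0 < t)
    (Q : Finset (Finset V)) (hQ : ∀ S ∈ Q, #S = t) :
    ∃ χ : V → Fin t, ∃ R ⊆ Q, (∀ S ∈ R, Set.InjOn χ ↑S) ∧ t.factorial * #Q ≤ #R * t ^ t := by
  classical
  have : Nonempty (V → Fin t) := ⟨fun _ => ⟨0, ht⟩⟩
  have hsum : ∑ χ : V → Fin t, #(Q.filter fun S : Finset V => Set.InjOn χ ↑S) * t ^ t =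
      ∑ _χ : V → Fin t, t.factorial * #Q := by
    have hdc := sum_card_bipartiteAbove_eq_sum_card_bipartiteBelow
      (s := (univ : Finset (V → Fin t))) (t := Q) (fun χ (S : Finset V) => Set.InjOn χ ↑S)
    simp only [bipartiteAbove, bipartiteBelow] at hdc
    rw [← sum_mul, hdc, sum_mul, sum_congr rfl fun S hS => card_injOn_mul t S (hQ S hS)]
    simp only [sum_const, smul_eq_mul, card_univ]
    ring
  obtain ⟨χ, -, h⟩ := exists_le_of_sum_le univ_nonempty hsum.ge
  exact ⟨χ, _, filter_subset _ _, fun S hS => (mem_filter.1 hS).2, h⟩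


/-- For `2 ≤ t ≤ k` and `|V| = k`, there are a colouring `χ : V → {1,…,t}` and an
edge-disjoint packing `Qs` of `t`-cliques, all of whose members are multicoloured
under `χ`, with `|Qs| ≥ (t!/tᵗ) · (k(k−1)/2 − (1 − 1/(t−1))·k²/2) / (t(t−1)/2)`. -/
theorem exists_multicoloured_clique_packing
    {V : Type*} [Fintype V] [DecidableEq V]
    (t k : ℕ) (ht : 2 ≤ t) (htk : t ≤ k) (hV : Fintype.card V = k) :
    ∃ (χ : V → Fin t) (Qs : Finset (Finset V)),
      (∀ S ∈ Qs, S.card = t) ∧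
      (∀ S ∈ Qs, ∀ T ∈ Qs, S ≠ T → (S ∩ T).card ≤ 1) ∧
      (∀ S ∈ Qs, Set.InjOn χ ↑S) ∧
      ((Nat.factorial t : ℝ) / (t : ℝ) ^ t) *
          (((k : ℝ) * ((k : ℝ) - 1) / 2 - (1 - 1 / ((t : ℝ) - 1)) * (k : ℝ) ^ 2 / 2) /
            ((t : ℝ) * ((t : ℝ) - 1) / 2)) ≤ (Qs.card : ℝ) := by
  obtain ⟨Q, hc, hp, e, he, hcount⟩ := exists_large_packing (V := V) t ht
  obtain ⟨χ, R, hRQ, hR, hcard⟩ := exists_colouring t (by lia) Q hc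
  refine ⟨χ, R, fun S hS => hc S (hRQ hS), fun S hS T hT => hp S (hRQ hS) T (hRQ hT), hR, ?_⟩
  have ht' : (2 : ℝ) ≤ t := by exact_mod_cast ht
  have ht1 : (0 : ℝ) < (t : ℝ) - 1 := by linarith
  have hcardR : (t.factorial : ℝ) * #Q ≤ #R * (t : ℝ) ^ t := by exact_mod_cast hcard
  have heR : 2 * ((t : ℝ) - 1) * e ≤ ((t : ℝ) - 2) * (k : ℝ) ^ 2 := by
    rw [hV] at he
    have := (Nat.cast_le (α := ℝ)).2 he
    push_cast [Nat.cast_sub ht, Nat.cast_sub (show 1 ≤ t by lia)] at this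
    exact this
  have hcountR : (k : ℝ) * k - k ≤ 2 * e + #Q * ((t : ℝ) * t - t) := by
    rw [offDiag_card, card_univ, hV] at hcount
    have := (Nat.cast_le (α := ℝ)).2 hcount
    push_cast [Nat.cast_sub (Nat.le_mul_self k), Nat.cast_sub (Nat.le_mul_self t)] at this
    exact this
  have hturan : (e : ℝ) ≤ (1 - 1 / ((t : ℝ) - 1)) * (k : ℝ) ^ 2 / 2 := by
    have : (1 - 1 / ((t : ℝ) - 1)) * (k : ℝ) ^ 2 / 2 =
        ((t : ℝ) - 2) * (k : ℝ) ^ 2 / (2 * ((t : ℝ) - 1)) := by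
      field_simp
      ring
    rw [this, le_div_iff₀ (by linarith)]
    linarith
  have hQ : ((k : ℝ) * ((k : ℝ) - 1) / 2 - (1 - 1 / ((t : ℝ) - 1)) * (k : ℝ) ^ 2 / 2) /
      ((t : ℝ) * ((t : ℝ) - 1) / 2) ≤ #Q := by
    rw [div_le_iff₀ (by positivity)]
    linarith
  calc _ ≤ ((Nat.factorial t : ℝ) / (t : ℝ) ^ t) * #Q := by gcongr
    _ ≤ #R := by
      rw [div_mul_eq_mul_div, div_le_iff₀ (by positivity)]
      exact hcardR
end

section
/- For every integer t ≥ 2 there exists an integer k₀(t), depending only on t, such that for every k ≥ k₀(t) there exists a finite simple graph H on the vertex set {1,…,t} × {1,…,k} with the following properties: (a) H is t-partite with parts U_i = {i} × {1,…,k} of size k each (every edge joins vertices in distinct parts); (b) H is the disjoint union of t pairwise isomorphic graphs (there is a partition of V(H) into t parts, with no edges of H between different parts, such that the t induced subgraphs are pairwise isomorphic); and (c) the edge set of H admits a partition 𝒫 into edge sets of t-cliques of H, each containing exactly one vertex from each part U_i, with |𝒫| ≥ k²/(t²·eᵗ). -/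
/-!
Write `k = t * p + r` with `p ≥ t` prime, and identify `Fin k` with
`(Fin t × ZMod p) ⊕ Fin r`. The graph consists of `t` disjoint copies of the complete `t`-partite
graph with parts of size `p`; the `t * r` remaining vertices are isolated, and those lying in
`U_i` are added to the `i`-th copy, so that every copy has `k` vertices.

Each complete `t`-partite copy decomposes into the `p ^ 2` lines
`{(i, a * i + b) : i < t}` with `a b : ZMod p`: as `t ≤ p`, two points with distinct first
coordinates lie on exactly one line. This gives `t * p ^ 2` multicoloured cliques.

Bertrand's postulate, applied to `⌊k / t⌋ / 2`, provides such a `p` with `p * t ≤ k ≤ 2 * t * p`,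
whence `t * p ^ 2 ≥ k ^ 2 / (4 * t)`, which is enough because `t * exp t ≥ 4`.
-/

/-- Copy index of a vertex: the label `s` of its copy, or, for an isolated vertex, the index of
the part containing it. -/
def copyIndex {t p r : ℕ} : Fin t × ((Fin t × ZMod p) ⊕ Fin r) → Fin t
  | (_, Sum.inl (s, _)) => s
  | (x, Sum.inr _) => x

/-- Disjoint union of `t` complete `t`-partite graphs with parts of size `p`, together with `r`
isolated vertices in each part. -/
def copiesGraph (t p r : ℕ) : SimpleGraph (Fin t × ((Fin t × ZMod p) ⊕ Fin r)) where
  Adj u v := u.1 ≠ v.1 ∧ ∃ s z w, u.2 = Sum.inl (s, z) ∧ v.2 = Sum.inl (s, w)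
  symm := ⟨fun _ _ ⟨h, s, z, w, hu, hv⟩ => ⟨h.symm, s, w, z, hv, hu⟩⟩
  loopless := ⟨fun _ h => h.1 rfl⟩

/-- The involution permuting the copies by `Equiv.swap i j`, isolated vertices included. -/
def swapCopies {t p r : ℕ} (i j : Fin t) :
    Fin t × ((Fin t × ZMod p) ⊕ Fin r) → Fin t × ((Fin t × ZMod p) ⊕ Fin r)
  | (x, Sum.inl (s, z)) => (x, Sum.inl (Equiv.swap i j s, z))
  | (x, Sum.inr y) => (Equiv.swap i j x, Sum.inr y)

lemma swapCopies_involutive {t p r : ℕ} (i j : Fin t) :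
    Function.Involutive (swapCopies (p := p) (r := r) i j) := by
  rintro ⟨x, ⟨s, z⟩ | y⟩ <;> simp [swapCopies]

lemma copyIndex_swapCopies {t p r : ℕ} (i j : Fin t)
    (v : Fin t × ((Fin t × ZMod p) ⊕ Fin r)) :
    copyIndex (swapCopies i j v) = Equiv.swap i j (copyIndex v) := by
  rcases v with ⟨x, ⟨s, z⟩ | y⟩ <;> simp [swapCopies, copyIndex]

lemma copiesGraph_adj_swapCopies {t p r : ℕ} (i j : Fin t)
    (u v : Fin t × ((Fin t × ZMod p) ⊕ Fin r)) :
    (copiesGraph t p r).Adj (swapCopies i j u) (swapCopies i j v) ↔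
      (copiesGraph t p r).Adj u v := by
  rcases u with ⟨x, ⟨s, z⟩ | y⟩ <;> rcases v with ⟨x', ⟨s', z'⟩ | y'⟩ <;>
    simp [swapCopies, copiesGraph]

/-- The point over `i` of the line `i ↦ a * i + b` in copy `s`, where `d = (s, a, b)`. -/
def linePoint {t p r : ℕ} (d : Fin t × ZMod p × ZMod p) (i : Fin t) :
    Fin t × ((Fin t × ZMod p) ⊕ Fin r) :=
  (i, Sum.inl (d.1, d.2.1 * (i : ℕ) + d.2.2))

lemma natCast_sub_ne_zero {t p : ℕ} (htp : t ≤ p) {i j : Fin t} (h : i ≠ j) :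
    ((i : ℕ) : ZMod p) - ((j : ℕ) : ZMod p) ≠ 0 := by
  intro h0
  have h1 := (ZMod.natCast_eq_natCast_iff' _ _ _).1 (sub_eq_zero.1 h0)
  rw [Nat.mod_eq_of_lt (i.2.trans_le htp), Nat.mod_eq_of_lt (j.2.trans_le htp)] at h1
  exact h (Fin.ext h1)

/-- Two points with distinct first coordinates lie on at most one line. -/
lemma line_unique {t p r : ℕ} [Fact p.Prime] (htp : t ≤ p) {i j : Fin t} (h : i ≠ j)
    {d d' : Fin t × ZMod p × ZMod p}
    (hi : linePoint (r := r) d i = linePoint d' i)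
    (hj : linePoint (r := r) d j = linePoint d' j) : d = d' := by
  obtain ⟨s, a, b⟩ := d
  obtain ⟨s', a', b'⟩ := d'
  simp only [linePoint, Prod.mk.injEq, Sum.inl.injEq, true_and] at hi hj
  have hz : (a - a') * (((i : ℕ) : ZMod p) - ((j : ℕ) : ZMod p)) = 0 := by
    linear_combination hi.2 - hj.2
  have ha : a = a' :=
    sub_eq_zero.1 ((mul_eq_zero.1 hz).resolve_right (natCast_sub_ne_zero htp h))
  subst ha
  have hb : b = b' := by linear_combination hi.2
  rw [hi.1, hb]

/-- Adjacent vertices lie on a common line. -/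
lemma exists_line {t p r : ℕ} [Fact p.Prime] (htp : t ≤ p)
    {u v : Fin t × ((Fin t × ZMod p) ⊕ Fin r)} (h : (copiesGraph t p r).Adj u v) :
    ∃ d, linePoint d u.1 = u ∧ linePoint d v.1 = v := by
  obtain ⟨i, u⟩ := u
  obtain ⟨j, v⟩ := v
  obtain ⟨hij, s, z, w, rfl, rfl⟩ := h
  have hne := natCast_sub_ne_zero htp hij
  refine ⟨(s, (z - w) / (((i : ℕ) : ZMod p) - ((j : ℕ) : ZMod p)),
    z - (z - w) / (((i : ℕ) : ZMod p) - ((j : ℕ) : ZMod p)) * (i : ℕ)), ?_, ?_⟩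
  · simp [linePoint]
  · simp only [linePoint, Prod.mk.injEq, Sum.inl.injEq, true_and]
    field_simp
    ring

/-- The construction, carried over to any type `W` in bijection with `(Fin t × ZMod p) ⊕ Fin r`. -/
lemma exists_graph_of_prime {t p r : ℕ} [Fact p.Prime] (ht : 2 ≤ t) (htp : t ≤ p)
    {W : Type} (e : W ≃ (Fin t × ZMod p) ⊕ Fin r) :
    ∃ H : SimpleGraph (Fin t × W),
      (∀ u v : Fin t × W, H.Adj u v → u.1 ≠ v.1) ∧
      (∃ f : Fin t × W → Fin t,
        (∀ u v : Fin t × W, H.Adj u v → f u = f v) ∧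
        (∀ i j : Fin t,
          Nonempty ((H.induce {v | f v = i}) ≃g (H.induce {v | f v = j})))) ∧
      (∃ Ps : Finset (Finset (Fin t × W)),
        (∀ C ∈ Ps, H.IsNClique t C ∧ ∀ i : Fin t, ∃! v, v ∈ C ∧ v.1 = i) ∧
        (∀ u v : Fin t × W, H.Adj u v → ∃! C, C ∈ Ps ∧ u ∈ C ∧ v ∈ C) ∧
        Ps.card = t * p ^ 2) := by
  classical
  let φ : Fin t × W ≃ Fin t × ((Fin t × ZMod p) ⊕ Fin r) := Equiv.prodCongr (Equiv.refl _) e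
  refine ⟨(copiesGraph t p r).comap φ, fun u v h => h.1, ⟨fun v => copyIndex (φ v), ?_, ?_⟩, ?_⟩
  · rintro ⟨x, u⟩ ⟨y, v⟩ ⟨-, s, z, w, hu, hv⟩
    have hu' : e u = Sum.inl (s, z) := hu
    have hv' : e v = Sum.inl (s, w) := hv
    simp [φ, hu', hv', copyIndex]
  · intro i j
    let σ : Fin t × W ≃ Fin t × W :=
      φ.trans ((swapCopies_involutive i j).toPerm.trans φ.symm)
    have hσ : ∀ v, φ (σ v) = swapCopies i j (φ v) := fun v => by simp [σ]
    refine ⟨⟨σ.subtypeEquiv fun v => ?_, fun {u v} => ?_⟩⟩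
    · simp only [Set.mem_ofPred_eq, hσ, copyIndex_swapCopies]
      rw [Equiv.swap_apply_eq_iff, Equiv.swap_apply_right]
    · change (copiesGraph t p r).Adj (φ (σ u)) (φ (σ v)) ↔ (copiesGraph t p r).Adj (φ u) (φ v)
      rw [hσ, hσ, copiesGraph_adj_swapCopies]
  · let L : Fin t × ZMod p × ZMod p → Fin t → Fin t × W := fun d i => φ.symm (linePoint d i)
    have hL1 : ∀ d i, (L d i).1 = i := fun d i => rfl
    let B : Fin t × ZMod p × ZMod p → Finset (Fin t × W) := fun d => Finset.univ.image (L d)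
    have hB : ∀ d v, v ∈ B d ↔ L d v.1 = v := by
      intro d v
      simp only [B, Finset.mem_image, Finset.mem_univ, true_and]
      constructor
      · rintro ⟨i, rfl⟩
        rw [hL1]
      · exact fun h => ⟨_, h⟩
    have huniq : ∀ d d' u v, u.1 ≠ v.1 → u ∈ B d → v ∈ B d → u ∈ B d' → v ∈ B d' → d = d' := by
      intro d d' u v huv h1 h2 h3 h4
      rw [hB] at h1 h2 h3 h4
      exact line_unique htp huv (φ.symm.injective (h1.trans h3.symm))
        (φ.symm.injective (h2.trans h4.symm))
    have hBinj : Function.Injective B := by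
      intro d d' h
      have h01 : (⟨0, by omega⟩ : Fin t) ≠ ⟨1, by omega⟩ := by simp
      have hm : ∀ i, L d i ∈ B d := fun i => (hB _ _).2 (by rw [hL1])
      exact huniq d d' (L d ⟨0, by omega⟩) (L d ⟨1, by omega⟩) h01 (hm _) (hm _)
        (h ▸ hm _) (h ▸ hm _)
    refine ⟨Finset.univ.image B, ?_, ?_, ?_⟩
    · intro C hC
      obtain ⟨d, -, rfl⟩ := Finset.mem_image.1 hC
      refine ⟨⟨?_, ?_⟩, fun i => ⟨L d i, ⟨(hB _ _).2 (by rw [hL1]), hL1 _ _⟩, ?_⟩⟩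
      · intro u hu v hv huv
        have hu' := (hB d u).1 hu
        have hv' := (hB d v).1 hv
        have h1 : u.1 ≠ v.1 := fun h => huv (by rw [← hu', ← hv', h])
        refine ⟨h1, d.1, d.2.1 * ((u.1 : Fin t) : ℕ) + d.2.2,
          d.2.1 * ((v.1 : Fin t) : ℕ) + d.2.2, ?_, ?_⟩
        · exact (congrArg Prod.snd (φ.symm_apply_eq.1 hu')).symm
        · exact (congrArg Prod.snd (φ.symm_apply_eq.1 hv')).symm
      · rw [Finset.card_image_of_injective, Finset.card_univ, Fintype.card_fin]
        intro i j h
        rw [← hL1 d i, h, hL1]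
      · rintro v ⟨hv, rfl⟩
        exact ((hB _ _).1 hv).symm
    · intro u v huv
      obtain ⟨d, hdu, hdv⟩ := exists_line htp huv
      have hu : u ∈ B d := (hB _ _).2 (φ.symm_apply_eq.2 hdu)
      have hv : v ∈ B d := (hB _ _).2 (φ.symm_apply_eq.2 hdv)
      refine ⟨B d, ⟨Finset.mem_image_of_mem _ (Finset.mem_univ _), hu, hv⟩, ?_⟩
      rintro C ⟨hC, hu', hv'⟩
      obtain ⟨d', -, rfl⟩ := Finset.mem_image.1 hC
      rw [huniq d d' u v huv.1 hu hv hu' hv']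
    · rw [Finset.card_image_of_injective _ hBinj, Finset.card_univ]
      simp [ZMod.card, sq]


/-- For every `t ≥ 2` there is `k₀(t)` such that for every `k ≥ k₀(t)` there is a
graph `H` on `{1,…,t} × {1,…,k}` which is (a) `t`-partite with parts
`U_i = {i} × {1,…,k}`; (b) the disjoint union of `t` pairwise isomorphic graphs;
and (c) whose edge set can be partitioned into multicoloured `t`-cliques
(one vertex in each part `U_i`), at least `k²/(t²·eᵗ)` many. -/
theorem exists_Htk_graph (t : ℕ) (ht : 2 ≤ t) :
    ∃ k₀ : ℕ, ∀ k : ℕ, k₀ ≤ k →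
      ∃ H : SimpleGraph (Fin t × Fin k),
        -- (a) t-partite with parts U_i = {i} × Fin k
        (∀ u v : Fin t × Fin k, H.Adj u v → u.1 ≠ v.1) ∧
        -- (b) disjoint union of t pairwise isomorphic graphs
        (∃ f : Fin t × Fin k → Fin t,
          (∀ u v : Fin t × Fin k, H.Adj u v → f u = f v) ∧
          (∀ i j : Fin t,
            Nonempty ((H.induce {v | f v = i}) ≃g (H.induce {v | f v = j})))) ∧
        -- (c) partition of the edges into multicoloured t-cliques
        (∃ Ps : Finset (Finset (Fin t × Fin k)),
          (∀ C ∈ Ps, H.IsNClique t C ∧ ∀ i : Fin t, ∃! v, v ∈ C ∧ v.1 = i) ∧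
          (∀ u v : Fin t × Fin k, H.Adj u v → ∃! C, C ∈ Ps ∧ u ∈ C ∧ v ∈ C) ∧
          (k : ℝ) ^ 2 / ((t : ℝ) ^ 2 * Real.exp t) ≤ (Ps.card : ℝ)) := by
  refine ⟨t * (2 * t), fun k hk => ?_⟩
  obtain ⟨p, hp, hlt, hle⟩ := Nat.exists_prime_lt_and_le_two_mul (k / t / 2) (by
    have : 2 * t ≤ k / t := (Nat.le_div_iff_mul_le (by omega)).2 (by rwa [mul_comm])
    omega)
  have hq : 2 * t ≤ k / t := (Nat.le_div_iff_mul_le (by omega)).2 (by rwa [mul_comm])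
  have htp : t ≤ p := by omega
  have hpq : p ≤ k / t := by omega
  have hpk : p * t ≤ k := (Nat.le_div_iff_mul_le (by omega)).1 hpq
  have hk2 : k ≤ 2 * p * t := by
    have h1 : k / t < 2 * p := by omega
    exact ((Nat.div_lt_iff_lt_mul (by omega)).1 h1).le
  have : Fact p.Prime := ⟨hp⟩
  have e : Fin k ≃ (Fin t × ZMod p) ⊕ Fin (k - p * t) := by
    apply Fintype.equivOfCardEq
    simp only [Fintype.card_sum, Fintype.card_prod, Fintype.card_fin, ZMod.card]
    rw [mul_comm t p]
    omega
  obtain ⟨H, ha, hb, Ps, h1, h2, h3⟩ := exists_graph_of_prime ht htp e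
  refine ⟨H, ha, hb, Ps, h1, h2, ?_⟩
  have ht' : (2 : ℝ) ≤ t := by exact_mod_cast ht
  have hk' : (k : ℝ) ≤ 2 * p * t := by exact_mod_cast hk2
  have hexp : (t : ℝ) + 1 ≤ Real.exp t := Real.add_one_le_exp _
  have h4 : (4 : ℝ) ≤ t * Real.exp t := by nlinarith
  rw [h3, div_le_iff₀ (by positivity)]
  push_cast
  calc (k : ℝ) ^ 2 ≤ (2 * (p : ℝ) * t) ^ 2 := by gcongr
    _ = (p : ℝ) ^ 2 * (t : ℝ) ^ 2 * 4 := by ring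
    _ ≤ (p : ℝ) ^ 2 * (t : ℝ) ^ 2 * (t * Real.exp t) := by gcongr
    _ = (t : ℝ) * (p : ℝ) ^ 2 * ((t : ℝ) ^ 2 * Real.exp t) := by ring
end

section
/- Let p be a prime, d ≥ 1, and for integers i ≥ 0 and ℓ ≥ 1 with i + ℓ ≤ d and an integer s with 0 < s < p^ℓ and p ∤ s, define the coset C(s,ℓ,i) = {x ∈ Z_{p^d} : x ≠ 0, ord(x) = i, and sind(x,ℓ) = s}. Then: (a) every such set C(s,ℓ,i) is nonempty; (b) any two such sets are either disjoint or one contains the other (the family is laminar); and (c) C(s,ℓ,i) ⊆ C(s',ℓ',i') holds if and only if i = i', ℓ ≥ ℓ', and s ≡ s' (mod p^{ℓ'}). -/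
/-!
Everything rests on two facts. A unit part `t < p ^ m` with `p ∤ t` and `i + m ≤ d` gives the element
`p ^ i * t`, whose representative does not wrap around, so its valuation is `i` and its `k`-digit
suffix is `t % p ^ k` (`exists_ordZ_sindZ`); this yields nonemptiness. Shorter suffixes are
reductions of longer ones (`sindZ_mod`); this yields the sufficient condition for containment, and a
common element of two cosets makes that condition hold in one of the two directions.

For the necessity of `ℓ' ≤ ℓ`: if `ℓ < ℓ'`, then the unit parts `s` and `s + p ^ ℓ` both give elements
of `C(s,ℓ,i)`, but as distinct numbers below `p ^ ℓ'` they have different `ℓ'`-digit suffixes.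
-/

/-- `ord(x)`: the `p`-adic valuation of the canonical representative of
`x ∈ ZMod (p^d)`. -/
def ordZ (p d : ℕ) (x : ZMod (p ^ d)) : ℕ := padicValNat p x.val

/-- `sind(x,ℓ)`: the `ℓ`-digit suffix of `x ∈ ZMod (p^d)` in base `p`,
i.e. `(val(x) / p^{ord(x)}) mod p^ℓ`. -/
def sindZ (p d : ℕ) (x : ZMod (p ^ d)) (ℓ : ℕ) : ℕ :=
  (x.val / p ^ ordZ p d x) % p ^ ℓ

/-- The coset `C(s,ℓ,i) = {x ∈ ZMod (p^d) : x ≠ 0, ord(x) = i, sind(x,ℓ) = s}`. -/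
def cosetZ (p d : ℕ) (s ℓ i : ℕ) : Set (ZMod (p ^ d)) :=
  {x | x ≠ 0 ∧ ordZ p d x = i ∧ sindZ p d x ℓ = s}

/-- A unit part `t` of at most `d - i` digits is realised by the element `p ^ i * t`. -/
lemma exists_ordZ_sindZ {p d t m i : ℕ} (hp : p.Prime) (him : i + m ≤ d)
    (ht : t < p ^ m) (hpt : ¬ p ∣ t) :
    ∃ x : ZMod (p ^ d), x ≠ 0 ∧ ordZ p d x = i ∧ ∀ k, sindZ p d x k = t % p ^ k := by
  have : Fact p.Prime := ⟨hp⟩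
  have hpi : 0 < p ^ i := pow_pos hp.pos i
  have ht0 : t ≠ 0 := by
    rintro rfl
    exact hpt (dvd_zero p)
  have hlt : p ^ i * t < p ^ d :=
    calc p ^ i * t < p ^ i * p ^ m := Nat.mul_lt_mul_of_pos_left ht hpi
      _ = p ^ (i + m) := (pow_add p i m).symm
      _ ≤ p ^ d := Nat.pow_le_pow_right hp.pos him
  have hval : ((p ^ i * t : ℕ) : ZMod (p ^ d)).val = p ^ i * t := ZMod.val_cast_of_lt hlt
  have hord : ordZ p d ((p ^ i * t : ℕ) : ZMod (p ^ d)) = i := by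
    rw [ordZ, hval, padicValNat.mul hpi.ne' ht0, padicValNat.prime_pow,
      padicValNat.eq_zero_of_not_dvd hpt, add_zero]
  refine ⟨((p ^ i * t : ℕ) : ZMod (p ^ d)), ?_, hord, fun k => ?_⟩
  · intro h
    rw [h, ZMod.val_zero] at hval
    exact mul_ne_zero hpi.ne' ht0 hval.symm
  · rw [sindZ, hord, hval, Nat.mul_div_cancel_left t hpi]

lemma sindZ_mod {p d k l : ℕ} (hkl : k ≤ l) (x : ZMod (p ^ d)) :
    sindZ p d x l % p ^ k = sindZ p d x k :=
  Nat.mod_mod_of_dvd _ (pow_dvd_pow p hkl)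

lemma cosetZ_subset_of_modEq {p d s l s' l' i : ℕ} (hl : l' ≤ l) (hs' : s' < p ^ l')
    (h : s ≡ s' [MOD p ^ l']) : cosetZ p d s l i ⊆ cosetZ p d s' l' i := by
  rintro x ⟨hx0, hxi, hxs⟩
  refine ⟨hx0, hxi, ?_⟩
  rw [← sindZ_mod hl, hxs, h, Nat.mod_eq_of_lt hs']

/-- A common element of two cosets forces their parameters to be compatible. -/
lemma modEq_of_mem_cosetZ {p d s l i s' l' i' : ℕ} {x : ZMod (p ^ d)} (hl : l' ≤ l)
    (hs' : s' < p ^ l') (hx : x ∈ cosetZ p d s l i) (hx' : x ∈ cosetZ p d s' l' i') :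
    i = i' ∧ s ≡ s' [MOD p ^ l'] := by
  obtain ⟨-, hxi, hxs⟩ := hx
  obtain ⟨-, hxi', hxs'⟩ := hx'
  refine ⟨hxi.symm.trans hxi', ?_⟩
  rw [Nat.ModEq, ← hxs, sindZ_mod hl, hxs', Nat.mod_eq_of_lt hs']

/-- The cosets `C(s,ℓ,i)` (for valid parameters `i ≥ 0`, `ℓ ≥ 1`, `i + ℓ ≤ d`,
`0 < s < p^ℓ`, `p ∤ s`) are nonempty and form a laminar family; containment
`C(s,ℓ,i) ⊆ C(s',ℓ',i')` holds iff `i = i'`, `ℓ ≥ ℓ'` and `s ≡ s' (mod p^{ℓ'})`. -/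
theorem cosetZ_laminar
    (p d : ℕ) (hp : p.Prime) (hd : 1 ≤ d)
    (s ℓ i : ℕ) (hℓ : 1 ≤ ℓ) (hiℓ : i + ℓ ≤ d)
    (hs0 : 0 < s) (hs : s < p ^ ℓ) (hps : ¬ p ∣ s)
    (s' ℓ' i' : ℕ) (hℓ' : 1 ≤ ℓ') (hiℓ' : i' + ℓ' ≤ d)
    (hs0' : 0 < s') (hs' : s' < p ^ ℓ') (hps' : ¬ p ∣ s') :
    (cosetZ p d s ℓ i).Nonempty ∧
    (Disjoint (cosetZ p d s ℓ i) (cosetZ p d s' ℓ' i') ∨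
      cosetZ p d s ℓ i ⊆ cosetZ p d s' ℓ' i' ∨
      cosetZ p d s' ℓ' i' ⊆ cosetZ p d s ℓ i) ∧
    (cosetZ p d s ℓ i ⊆ cosetZ p d s' ℓ' i' ↔
      (i = i' ∧ ℓ' ≤ ℓ ∧ s ≡ s' [MOD p ^ ℓ'])) := by
  have hne : (cosetZ p d s ℓ i).Nonempty := by
    obtain ⟨x, hx0, hxi, hxs⟩ := exists_ordZ_sindZ hp hiℓ hs hps
    exact ⟨x, hx0, hxi, by rw [hxs, Nat.mod_eq_of_lt hs]⟩
  refine ⟨hne, ?_, fun hsub => ?_, ?_⟩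
  · rw [or_iff_not_imp_left, Set.not_disjoint_iff]
    rintro ⟨x, hx, hx'⟩
    rcases le_total ℓ' ℓ with h | h
    · obtain ⟨rfl, hmod⟩ := modEq_of_mem_cosetZ h hs' hx hx'
      exact Or.inl (cosetZ_subset_of_modEq h hs' hmod)
    · obtain ⟨rfl, hmod⟩ := modEq_of_mem_cosetZ h hs hx' hx
      exact Or.inr (cosetZ_subset_of_modEq h hs hmod)
  · obtain ⟨x, hx⟩ := hne
    have hi : i = i' := hx.2.1.symm.trans (hsub hx).2.1
    have hle : ℓ' ≤ ℓ := by
      by_contra! hlt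
      have hpow : 2 * p ^ ℓ ≤ p ^ ℓ' :=
        calc 2 * p ^ ℓ ≤ p * p ^ ℓ := Nat.mul_le_mul_right _ hp.two_le
          _ = p ^ (ℓ + 1) := (pow_succ' p ℓ).symm
          _ ≤ p ^ ℓ' := Nat.pow_le_pow_right hp.pos hlt
      -- Any `ℓ'`-digit unit part ending in the digits of `s` must equal `s'`.
      have key : ∀ t, t < p ^ ℓ' → ¬ p ∣ t → t % p ^ ℓ = s → t = s' := by
        intro t ht hpt hts
        obtain ⟨y, hy0, hyi, hys⟩ := exists_ordZ_sindZ hp (hi ▸ hiℓ' : i + ℓ' ≤ d) ht hpt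
        have hy : y ∈ cosetZ p d s ℓ i := ⟨hy0, hyi, (hys ℓ).trans hts⟩
        rw [← (hsub hy).2.2, hys, Nat.mod_eq_of_lt ht]
      have hsmod : s % p ^ ℓ = s := Nat.mod_eq_of_lt hs
      have h1 := key s (by omega) hps hsmod
      have hps2 : ¬ p ∣ s + p ^ ℓ := by
        rwa [← Nat.dvd_add_iff_left (dvd_pow_self p (by omega : ℓ ≠ 0))]
      have h2 := key (s + p ^ ℓ) (by omega) hps2 (by rw [Nat.add_mod_right, hsmod])
      omega
    exact ⟨hi, hle, (modEq_of_mem_cosetZ hle hs' hx (hsub hx)).2⟩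
  · rintro ⟨rfl, hle, hmod⟩
    exact cosetZ_subset_of_modEq hle hs' hmod
end

section
/- Let n ≥ κ ≥ 1 be integers, let V be a finite set with |V| = n, and let H be an (n,κ)-perfect hash family on V, i.e., a finite family of functions h : V → {1,…,κ} such that for every subset S ⊆ V with |S| = κ there is some h ∈ H that is injective on S. Let D be a finite nonempty set. Then there exists a family 𝓕 of functions from V to D of size |𝓕| ≤ |H|·|D|^κ such that for every subset S ⊆ V with |S| = κ and every function g : V → D, there is some f ∈ 𝓕 agreeing with g on S (f(x) = g(x) for all x ∈ S). -/
/-- Given an `(n,κ)`-perfect hash family `H` on an `n`-element set `V` and a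
finite nonempty set `D`, there is a family `F` of functions `V → D` of size at
most `|H|·|D|^κ` such that for every `κ`-element subset `S ⊆ V` and every
function `g : V → D`, some `f ∈ F` agrees with `g` on `S`. -/
theorem perfect_hash_family_to_function_family
    {V D : Type*} [Fintype V] [DecidableEq V] [Fintype D] [DecidableEq D] [Nonempty D]
    (n κ : ℕ) (hκ : 1 ≤ κ) (hκn : κ ≤ n) (hV : Fintype.card V = n)
    (H : Finset (V → Fin κ))
    (hH : ∀ S : Finset V, S.card = κ → ∃ h ∈ H, Set.InjOn h ↑S) :
    ∃ F : Finset (V → D),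
      F.card ≤ H.card * Fintype.card D ^ κ ∧
      ∀ S : Finset V, S.card = κ → ∀ g : V → D, ∃ f ∈ F, ∀ x ∈ S, f x = g x := by
  classical
  have : Nonempty V := Fintype.card_pos_iff.mp (by omega)
  -- All compositions `c ∘ h` of a hash function `h ∈ H` with a map `c : Fin κ → D`.
  refine ⟨(H ×ˢ (Finset.univ : Finset (Fin κ → D))).image (fun p => p.2 ∘ p.1), ?_, ?_⟩
  · refine Finset.card_image_le.trans ?_
    simp [Finset.card_product]
  · intro S hS g
    obtain ⟨h, hhH, hinj⟩ := hH S hS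
    -- As `h` is injective on `S`, `g` factors through `h` there.
    refine ⟨(g ∘ Function.invFunOn h ↑S) ∘ h, Finset.mem_image.mpr
      ⟨(h, g ∘ Function.invFunOn h ↑S), by simp [hhH], rfl⟩, fun x hx => ?_⟩
    exact congrArg g (hinj.leftInvOn_invFunOn (Finset.mem_coe.mpr hx))
end
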